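/- (Lemma 5.3, concentration of the truncated variance estimator.) For every bandwidth h = (h_1,…,h_d) with h_i > 0, every t ∈ ℝ^d and every η ≥ 0: P^{⊗n}( | σ̃²_{t,trunc}(h) / σ²_{t,trunc}(h) − 1 | ≥ η ) ≤ 2 exp( − 3η² log²n / ( 2(3+2η) ‖K‖_sup² ) ). -/

import Mathlib

open MeasureTheory Real
open scoped ENNReal BigOperators

noncomputable section

/-- `Vec d` is `ℝ^d` (with the product structure, used for anisotropic statements). -/
abbrev Vec (d : ℕ) := Fin d → ℝ

/-- Samples of size `n` from `ℝ^d`. -/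
abbrev Sample (d n : ℕ) := Fin n → Vec d

/-- The largest integer strictly smaller than `b` (for `b > 0`), i.e. `⌊b⌋` in the paper's
anisotropic Hölder class notation. -/
def hfl (b : ℝ) : ℕ := ⌈b⌉₊ - 1

/-- One-dimensional Taylor polynomial of `f` at `y'` of degree `l`, evaluated at `y`. -/
def taylorPoly (f : ℝ → ℝ) (l : ℕ) (y' y : ℝ) : ℝ :=
  ∑ k ∈ Finset.range (l + 1), iteratedDeriv k f y' / (Nat.factorial k : ℝ) * (y - y') ^ k

/-- The slice of `f : ℝ^d → ℝ` along coordinate `i` through the point `x`. -/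
def sliceFun {d : ℕ} (f : Vec d → ℝ) (i : Fin d) (x : Vec d) : ℝ → ℝ :=
  fun y => f (Function.update x i y)

/-- Anisotropic Hölder condition with exponents `β = (β_1, …, β_d)` and constant `L`:
in each coordinate `i`, the slices admit derivatives up to order `⌊β i⌋` (the largest
integer strictly less than `β i`) and the Taylor remainder of degree `⌊β i⌋` is bounded
by `L |y - y'| ^ (β i)`, uniformly in the remaining coordinates. For `β i ≤ 1` this is
the usual coordinatewise Hölder condition. -/
def HolderAniso (d : ℕ) (β : Vec d) (L : ℝ) (f : Vec d → ℝ) : Prop :=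
  ∀ i : Fin d,
    (∀ x : Vec d, ContDiff ℝ (hfl (β i)) (sliceFun f i x)) ∧
    ∀ (x : Vec d) (y y' : ℝ),
      |sliceFun f i x y - taylorPoly (sliceFun f i x) (hfl (β i)) y' y| ≤ L * |y - y'| ^ (β i)

/-- `p` is a probability density on `ℝ^d` (w.r.t. Lebesgue measure). -/
def IsProbDensity (d : ℕ) (p : Vec d → ℝ) : Prop :=
  Measurable p ∧ (∀ x, 0 ≤ p x) ∧ ∫ x, p x = 1

/-- The class `𝒫_d(β, L)` of anisotropic Hölder-smooth probability densities. -/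
def Pclass (d : ℕ) (β : Vec d) (L : ℝ) (p : Vec d → ℝ) : Prop :=
  IsProbDensity d p ∧ HolderAniso d β L p

/-- The unnormalized harmonic mean `β̄ = (∑ 1/β_i)⁻¹`. -/
def betaBar {d : ℕ} (β : Vec d) : ℝ := (∑ i, (β i)⁻¹)⁻¹

/-- `c₁(β, L) = sup { ‖p‖_∞ : p ∈ 𝒫_d(β, L) }`. -/
def c1const (d : ℕ) (β : Vec d) (L : ℝ) : ℝ :=
  sSup {c | ∃ p x, Pclass d β L p ∧ c = p x}

/-- The measure on `ℝ^d` with Lebesgue density `p`. -/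
def pdfMeasure (d : ℕ) (p : Vec d → ℝ) : Measure (Vec d) :=
  volume.withDensity fun x => ENNReal.ofReal (p x)

/-- The joint law `P^{⊗n}` of an i.i.d. sample of size `n` from the density `p`. -/
def jointMeasure (d n : ℕ) (p : Vec d → ℝ) : Measure (Sample d n) :=
  Measure.pi fun _ => pdfMeasure d p

/-- The `p`-dependent rate `ψ^n_{x,β} = min{ x, (x/n)^{β̄/(2β̄+1)} }` (with `bb = β̄`). -/
def psiRate (n : ℕ) (bb x : ℝ) : ℝ := min x ((x / n) ^ (bb / (2 * bb + 1)))

end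

noncomputable section

/-- `K` is a product kernel `K(x) = ∏ K_i(x_i)` whose factors are nonnegative, symmetric,
supported on `[-1,1]`, continuous on their support, integrate to one and are positive at `0`. -/
def IsProductKernel (d : ℕ) (K : Vec d → ℝ) : Prop :=
  ∃ Ki : Fin d → (ℝ → ℝ),
    (∀ x, K x = ∏ i, Ki i (x i)) ∧
    ∀ i : Fin d,
      (∀ y, 0 ≤ Ki i y) ∧ (∀ y, Ki i (-y) = Ki i y) ∧
      (∀ y, y ∉ Set.Icc (-1 : ℝ) 1 → Ki i y = 0) ∧
      ContinuousOn (Ki i) (Set.Icc (-1) 1) ∧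
      (∫ y, Ki i y = 1) ∧ 0 < Ki i 0

/-- The rescaled kernel `K_h(x) = (∏ h_i)⁻¹ K(x_1/h_1, …, x_d/h_d)`. -/
def scaledKernel (d : ℕ) (K : Vec d → ℝ) (h : Vec d) (x : Vec d) : ℝ :=
  (∏ i, h i)⁻¹ * K (fun i => x i / h i)

/-- The kernel density estimator `p̂_{n,h}(t) = n⁻¹ ∑_i K_h(t - X_i)`. -/
def kde (d n : ℕ) (K : Vec d → ℝ) (h : Vec d) (X : Sample d n) (t : Vec d) : ℝ :=
  (n : ℝ)⁻¹ * ∑ i, scaledKernel d K h (fun j => t j - X i j)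

/-- `‖K‖_sup`. -/
def KsupNorm (d : ℕ) (K : Vec d → ℝ) : ℝ := ⨆ x, |K x|

/-- `‖K‖₂² = ∫ K² dλ^d`. -/
def K2sq (d : ℕ) (K : Vec d → ℝ) : ℝ := ∫ x, (K x) ^ 2

/-- The exact variance proxy `σ_t²(h) = n⁻¹ ((K_h)² ∗ p)(t)`. -/
def sigmaSq (d n : ℕ) (K : Vec d → ℝ) (p : Vec d → ℝ) (h : Vec d) (t : Vec d) : ℝ :=
  (n : ℝ)⁻¹ * ∫ y, (scaledKernel d K h (fun i => t i - y i)) ^ 2 * p y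

/-- The truncation level `log²n / (n² ∏ h_i²)`. -/
def truncLevel (d n : ℕ) (h : Vec d) : ℝ :=
  (Real.log n) ^ 2 / ((n : ℝ) ^ 2 * (∏ i, h i) ^ 2)

/-- `σ²_{t,trunc}(h) = max{ log²n/(n² ∏ h_i²), σ_t²(h) }`. -/
def sigmaSqTrunc (d n : ℕ) (K : Vec d → ℝ) (p : Vec d → ℝ) (h : Vec d) (t : Vec d) : ℝ :=
  max (truncLevel d n h) (sigmaSq d n K p h t)

/-- The empirical variance `σ̃_t²(h) = (n² ∏ h_i²)⁻¹ ∑_i K²((t - X_i)/h)`. -/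
def sigmaTildeSq (d n : ℕ) (K : Vec d → ℝ) (h : Vec d) (X : Sample d n) (t : Vec d) : ℝ :=
  ((n : ℝ) ^ 2 * (∏ i, h i) ^ 2)⁻¹ * ∑ i, (K (fun j => (t j - X i j) / h j)) ^ 2

/-- `σ̃²_{t,trunc}(h) = max{ log²n/(n² ∏ h_i²), σ̃_t²(h) }`. -/
def sigmaTildeSqTrunc (d n : ℕ) (K : Vec d → ℝ) (h : Vec d) (X : Sample d n) (t : Vec d) : ℝ :=
  max (truncLevel d n h) (sigmaTildeSq d n K h X t)

/-- Membership of the multi-index `j` in the dyadic grid `𝒥`, i.e. `∑ j_i ≤ ⌊log₂(n/log²n)⌋`. -/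
def gridOK (d n : ℕ) (j : Fin d → ℕ) : Prop :=
  ((∑ i, j i : ℕ) : ℝ) ≤ Real.logb 2 ((n : ℝ) / (Real.log n) ^ 2)

/-- The bandwidth `(2^{-j_1}, …, 2^{-j_d})` associated with a multi-index `j`. -/
def bwOf (d : ℕ) (j : Fin d → ℕ) : Vec d := fun i => (2 : ℝ) ^ (-(j i : ℝ))

/-- The bias upper bound `B_t(h) = L ∑_i c_{9,i}(β) h_i^{β_i}`,
with `c_{9,i}(β) = ∫ |x_i|^{β_i} |K(x)| dλ^d(x)`. -/
def biasBound (d : ℕ) (K : Vec d → ℝ) (β : Vec d) (L : ℝ) (h : Vec d) : ℝ :=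
  L * ∑ i, (∫ x : Vec d, |x i| ^ (β i) * |K x|) * h i ^ (β i)

/-- The bias `b_t(h) = p(t) - (K_h ∗ p)(t)`. -/
def biasAt (d : ℕ) (K : Vec d → ℝ) (p : Vec d → ℝ) (h : Vec d) (t : Vec d) : ℝ :=
  p t - ∫ y, scaledKernel d K h (fun i => t i - y i) * p y

end

/-!
Each observation contributes to `σ̃_t²(h)` a term in `[0, b]` with `b = ‖K‖_sup² / (n² ∏ h_i²)`, and
these terms have means summing to `σ_t²(h)`. Convexity of `exp` bounds their moment generating
functions by those of Poisson variables, so Chernoff's method gives a relative deviation bound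
`2 exp(-η² w / ((2 + η) b))` at every scale `w` above the sum of the means. Truncation from below
at level `a` is 1-Lipschitz and lets one take `w ≥ a`; the quotient `a / b` is then
`log²n / ‖K‖_sup²`, which depends neither on `h` nor on `p`.
-/

open ProbabilityTheory

theorem sq_div_two_add_le_one_add_mul_log_sub {x : ℝ} (hx : 0 ≤ x) :
    x ^ 2 / (2 + x) ≤ (1 + x) * log (1 + x) - x :=
  calc x ^ 2 / (2 + x) = (1 + x) * (2 * x / (x + 2)) - x := by
        field_simp
        ring
    _ ≤ (1 + x) * log (1 + x) - x := by
        gcongr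
        exact le_log_one_add_of_nonneg hx

theorem exp_neg_le_one_sub_add_sq_div_two {x : ℝ} (hx : 0 ≤ x) :
    exp (-x) ≤ 1 - x + x ^ 2 / 2 := by
  rw [exp_neg, inv_le_iff_one_le_mul₀ (exp_pos x)]
  calc (1 : ℝ) ≤ (1 - x + x ^ 2 / 2) * (1 + x + x ^ 2 / 2) := by nlinarith [sq_nonneg (x ^ 2)]
    _ ≤ (1 - x + x ^ 2 / 2) * exp x := by
        gcongr
        · nlinarith [sq_nonneg (x - 1)]
        · exact quadratic_le_exp_of_nonneg hx

theorem three_mul_sq_div_le_sq_div_two_add {x : ℝ} (hx : 0 ≤ x) :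
    3 * x ^ 2 / (2 * (3 + 2 * x)) ≤ x ^ 2 / (2 + x) := by
  rw [div_le_div_iff₀ (by positivity) (by positivity)]
  nlinarith [pow_nonneg hx 3]

theorem abs_max_div_max_sub_one_le {a : ℝ} (ha : 0 < a) (s v : ℝ) :
    |max a s / max a v - 1| ≤ |s - v| / max a v := by
  have hw : 0 < max a v := lt_max_of_lt_left ha
  rw [div_sub_one hw.ne', abs_div, abs_of_pos hw]
  gcongr ?_ / _
  rw [max_comm a s, max_comm a v]
  exact abs_max_sub_max_le_abs s v a

section Concentration

variable {Ω : Type*} {mΩ : MeasurableSpace Ω} {μ : Measure Ω} {b : ℝ}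

/- The chord of `exp` over `[0, t * b]` lies above its graph; integrating the chord leaves a linear
function of the mean, and `1 + x ≤ exp x` turns it into the Poisson moment generating function. -/
theorem mgf_le_exp_of_mem_Icc [IsProbabilityMeasure μ] {Y : Ω → ℝ} (hb : 0 < b)
    (hY : AEMeasurable Y μ) (hYb : ∀ᵐ ω ∂μ, Y ω ∈ Set.Icc 0 b) (t : ℝ) :
    mgf Y μ t ≤ exp (μ[Y] / b * (exp (t * b) - 1)) := by
  have hint : Integrable Y μ := Integrable.of_mem_Icc 0 b hY hYb
  have hchord : ∀ᵐ ω ∂μ, exp (t * Y ω) ≤ 1 + Y ω / b * (exp (t * b) - 1) := by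
    filter_upwards [hYb] with ω ⟨h0, hle⟩
    have := convexOn_exp.2 (Set.mem_univ 0) (Set.mem_univ (t * b))
      (sub_nonneg.2 ((div_le_one hb).2 hle)) (div_nonneg h0 hb.le) (sub_add_cancel 1 (Y ω / b))
    simp only [smul_eq_mul, mul_zero, zero_add, exp_zero, mul_one] at this
    rw [show Y ω / b * (t * b) = t * Y ω by field_simp] at this
    linarith
  calc mgf Y μ t ≤ ∫ ω, (1 + Y ω / b * (exp (t * b) - 1)) ∂μ :=
        integral_mono_ae (integrable_exp_mul_of_mem_Icc hY hYb) (by fun_prop) hchord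
    _ = μ[Y] / b * (exp (t * b) - 1) + 1 := by
        rw [integral_add (by fun_prop) (by fun_prop), integral_mul_const, integral_div]
        simp [add_comm]
    _ ≤ exp (μ[Y] / b * (exp (t * b) - 1)) := add_one_le_exp _

variable {ι : Type*} {Y : ι → Ω → ℝ} {s : Finset ι} {η w : ℝ}

theorem mgf_sum_le_exp_of_mem_Icc (hindep : iIndepFun Y μ) (hY : ∀ i, AEMeasurable (Y i) μ)
    (hb : 0 < b) (hYb : ∀ i ∈ s, ∀ᵐ ω ∂μ, Y i ω ∈ Set.Icc 0 b) (t : ℝ) :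
    mgf (∑ i ∈ s, Y i) μ t ≤ exp ((∑ i ∈ s, μ[Y i]) / b * (exp (t * b) - 1)) := by
  have := hindep.isProbabilityMeasure
  rw [hindep.mgf_sum₀ hY, Finset.sum_div, Finset.sum_mul, exp_sum]
  exact Finset.prod_le_prod (fun _ _ => mgf_nonneg)
    fun i hi => mgf_le_exp_of_mem_Icc hb (hY i) (hYb i hi) t

theorem ae_sum_mem_Icc_of_mem_Icc (hYb : ∀ i ∈ s, ∀ᵐ ω ∂μ, Y i ω ∈ Set.Icc 0 b) :
    ∀ᵐ ω ∂μ, (∑ i ∈ s, Y i) ω ∈ Set.Icc 0 (s.card * b) := by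
  filter_upwards [(Finset.eventually_all s).2 hYb] with ω hω
  rw [Finset.sum_apply]
  exact ⟨Finset.sum_nonneg fun i hi => (hω i hi).1,
    (Finset.sum_le_card_nsmul s _ b fun i hi => (hω i hi).2).trans_eq (nsmul_eq_mul _ _)⟩

theorem sum_integral_nonneg_of_mem_Icc (hYb : ∀ i ∈ s, ∀ᵐ ω ∂μ, Y i ω ∈ Set.Icc 0 b) :
    0 ≤ ∑ i ∈ s, μ[Y i] :=
  Finset.sum_nonneg fun i hi => integral_nonneg_of_ae ((hYb i hi).mono fun _ h => h.1)

theorem measure_sum_ge_le_of_mem_Icc (hindep : iIndepFun Y μ) (hY : ∀ i, AEMeasurable (Y i) μ)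
    (hb : 0 < b) (hYb : ∀ i ∈ s, ∀ᵐ ω ∂μ, Y i ω ∈ Set.Icc 0 b) (hη : 0 ≤ η)
    (hw : ∑ i ∈ s, μ[Y i] ≤ w) :
    μ.real {ω | ∑ i ∈ s, μ[Y i] + η * w ≤ (∑ i ∈ s, Y i) ω} ≤
      exp (-(η ^ 2 / (2 + η) * (w / b))) := by
  have := hindep.isProbabilityMeasure
  set v := ∑ i ∈ s, μ[Y i]
  have hw0 : 0 ≤ w := (sum_integral_nonneg_of_mem_Icc hYb).trans hw
  have hlog : 0 ≤ log (1 + η) := log_nonneg (by linarith)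
  have hlog_le : log (1 + η) ≤ η := by linarith [log_le_sub_one_of_pos (by positivity : 0 < 1 + η)]
  -- the minimiser in `t` of `w / b * (exp (t * b) - 1 - t * b) - t * (η * w)`
  set t := log (1 + η) / b
  have htb : t * b = log (1 + η) := div_mul_cancel₀ _ hb.ne'
  calc μ.real {ω | v + η * w ≤ (∑ i ∈ s, Y i) ω}
      ≤ exp (-t * (v + η * w)) * mgf (∑ i ∈ s, Y i) μ t :=
        measure_ge_le_exp_mul_mgf _ (by positivity) <|
          integrable_exp_mul_of_mem_Icc (by fun_prop) (ae_sum_mem_Icc_of_mem_Icc hYb)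
    _ ≤ exp (-t * (v + η * w)) * exp (v / b * (exp (t * b) - 1)) := by
        gcongr
        exact mgf_sum_le_exp_of_mem_Icc hindep hY hb hYb t
    _ = exp (v / b * (η - log (1 + η)) - w / b * (η * log (1 + η))) := by
        rw [← exp_add, htb, exp_log (by positivity)]
        congr 1
        simp only [t]
        ring
    _ ≤ exp (w / b * (η - log (1 + η)) - w / b * (η * log (1 + η))) := by
        gcongr
    _ = exp (-(((1 + η) * log (1 + η) - η) * (w / b))) := by
        congr 1
        ring
    _ ≤ exp (-(η ^ 2 / (2 + η) * (w / b))) := by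
        gcongr
        exact sq_div_two_add_le_one_add_mul_log_sub hη

theorem measure_sum_le_le_of_mem_Icc (hindep : iIndepFun Y μ) (hY : ∀ i, AEMeasurable (Y i) μ)
    (hb : 0 < b) (hYb : ∀ i ∈ s, ∀ᵐ ω ∂μ, Y i ω ∈ Set.Icc 0 b) (hη : 0 ≤ η)
    (hw : ∑ i ∈ s, μ[Y i] ≤ w) :
    μ.real {ω | (∑ i ∈ s, Y i) ω ≤ ∑ i ∈ s, μ[Y i] - η * w} ≤ exp (-(η ^ 2 / 2 * (w / b))) := by
  have := hindep.isProbabilityMeasure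
  set v := ∑ i ∈ s, μ[Y i]
  have hw0 : 0 ≤ w := (sum_integral_nonneg_of_mem_Icc hYb).trans hw
  -- the minimiser in `t` of the quadratic majorant `w / b * ((t * b) ^ 2 / 2) + t * (η * w)`
  set t := -η / b
  have ht : t ≤ 0 := div_nonpos_of_nonpos_of_nonneg (neg_nonpos.2 hη) hb.le
  have htb : t * b = -η := div_mul_cancel₀ _ hb.ne'
  calc μ.real {ω | (∑ i ∈ s, Y i) ω ≤ v - η * w}
      ≤ exp (-t * (v - η * w)) * mgf (∑ i ∈ s, Y i) μ t :=
        measure_le_le_exp_mul_mgf _ ht <|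
          integrable_exp_mul_of_mem_Icc (by fun_prop) (ae_sum_mem_Icc_of_mem_Icc hYb)
    _ ≤ exp (-t * (v - η * w)) * exp (v / b * (exp (t * b) - 1)) := by
        gcongr
        exact mgf_sum_le_exp_of_mem_Icc hindep hY hb hYb t
    _ = exp (v / b * (exp (-η) - (1 - η)) - w / b * η ^ 2) := by
        rw [← exp_add, htb]
        congr 1
        simp only [t]
        ring
    _ ≤ exp (w / b * (exp (-η) - (1 - η)) - w / b * η ^ 2) := by
        gcongr
        linarith [one_sub_le_exp_neg η]
    _ ≤ exp (w / b * (η ^ 2 / 2) - w / b * η ^ 2) := by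
        gcongr
        linarith [exp_neg_le_one_sub_add_sq_div_two hη]
    _ = exp (-(η ^ 2 / 2 * (w / b))) := by
        congr 1
        ring

theorem measure_abs_sum_sub_ge_le_of_mem_Icc (hindep : iIndepFun Y μ)
    (hY : ∀ i, AEMeasurable (Y i) μ) (hb : 0 < b)
    (hYb : ∀ i ∈ s, ∀ᵐ ω ∂μ, Y i ω ∈ Set.Icc 0 b) (hη : 0 ≤ η) (hw : ∑ i ∈ s, μ[Y i] ≤ w) :
    μ.real {ω | η * w ≤ |(∑ i ∈ s, Y i) ω - ∑ i ∈ s, μ[Y i]|} ≤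
      2 * exp (-(η ^ 2 / (2 + η) * (w / b))) := by
  have := hindep.isProbabilityMeasure
  set v := ∑ i ∈ s, μ[Y i]
  have hw0 : 0 ≤ w := (sum_integral_nonneg_of_mem_Icc hYb).trans hw
  have hsplit : {ω | η * w ≤ |(∑ i ∈ s, Y i) ω - v|} ⊆
      {ω | v + η * w ≤ (∑ i ∈ s, Y i) ω} ∪ {ω | (∑ i ∈ s, Y i) ω ≤ v - η * w} := fun ω hω =>
    (le_abs.1 (Set.mem_ofPred.1 hω)).imp (fun h => le_sub_iff_add_le'.1 h)
      fun h => Set.mem_ofPred.2 (by linarith)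
  have hlower : exp (-(η ^ 2 / 2 * (w / b))) ≤ exp (-(η ^ 2 / (2 + η) * (w / b))) := by
    gcongr
    linarith
  calc μ.real {ω | η * w ≤ |(∑ i ∈ s, Y i) ω - v|}
      ≤ μ.real {ω | v + η * w ≤ (∑ i ∈ s, Y i) ω} +
          μ.real {ω | (∑ i ∈ s, Y i) ω ≤ v - η * w} :=
        (measureReal_mono hsplit).trans (measureReal_union_le _ _)
    _ ≤ 2 * exp (-(η ^ 2 / (2 + η) * (w / b))) := by
        rw [two_mul]
        exact add_le_add (measure_sum_ge_le_of_mem_Icc hindep hY hb hYb hη hw)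
          ((measure_sum_le_le_of_mem_Icc hindep hY hb hYb hη hw).trans hlower)

theorem measure_abs_max_sum_div_max_sub_one_ge_le_of_mem_Icc (hindep : iIndepFun Y μ)
    (hY : ∀ i, AEMeasurable (Y i) μ) (hb : 0 < b)
    (hYb : ∀ i ∈ s, ∀ᵐ ω ∂μ, Y i ω ∈ Set.Icc 0 b) (hη : 0 ≤ η) {a : ℝ} (ha : 0 < a) :
    μ.real {ω | η ≤ |max a ((∑ i ∈ s, Y i) ω) / max a (∑ i ∈ s, μ[Y i]) - 1|} ≤
      2 * exp (-(η ^ 2 / (2 + η) * (a / b))) := by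
  have := hindep.isProbabilityMeasure
  set v := ∑ i ∈ s, μ[Y i]
  have hsub : {ω | η ≤ |max a ((∑ i ∈ s, Y i) ω) / max a v - 1|} ⊆
      {ω | η * max a v ≤ |(∑ i ∈ s, Y i) ω - v|} := fun ω hω =>
    (le_div_iff₀ (lt_max_of_lt_left ha)).1 (le_trans hω (abs_max_div_max_sub_one_le ha _ _))
  calc μ.real {ω | η ≤ |max a ((∑ i ∈ s, Y i) ω) / max a v - 1|}
      ≤ 2 * exp (-(η ^ 2 / (2 + η) * (max a v / b))) :=
        (measureReal_mono hsub).trans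
          (measure_abs_sum_sub_ge_le_of_mem_Icc hindep hY hb hYb hη (le_max_right a v))
    _ ≤ 2 * exp (-(η ^ 2 / (2 + η) * (a / b))) := by
        gcongr
        exact le_max_left a v

end Concentration

namespace IsProbDensity

variable {d : ℕ} {p : Vec d → ℝ}

theorem isProbabilityMeasure_pdfMeasure (hp : IsProbDensity d p) :
    IsProbabilityMeasure (pdfMeasure d p) := by
  obtain ⟨-, hnonneg, hone⟩ := hp
  have hint : Integrable p := .of_integral_ne_zero (hone ▸ one_ne_zero)
  constructor
  rw [pdfMeasure, withDensity_apply _ .univ, Measure.restrict_univ,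
    ← ofReal_integral_eq_lintegral_ofReal hint (ae_of_all _ hnonneg), hone, ENNReal.ofReal_one]

theorem integral_pdfMeasure (hp : IsProbDensity d p) (g : Vec d → ℝ) :
    ∫ x, g x ∂pdfMeasure d p = ∫ x, g x * p x := by
  rw [pdfMeasure, integral_withDensity_eq_integral_toReal_smul hp.1.ennreal_ofReal
    (ae_of_all _ fun _ => ENNReal.ofReal_lt_top)]
  simp only [ENNReal.toReal_ofReal (hp.2.1 _), smul_eq_mul, mul_comm]

end IsProbDensity

section KernelSup

variable {d : ℕ} {K : Vec d → ℝ}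

theorem abs_le_KsupNorm (hK : BddAbove (Set.range fun x => |K x|)) (x : Vec d) :
    |K x| ≤ KsupNorm d K :=
  le_ciSup hK x

theorem KsupNorm_pos (hK : BddAbove (Set.range fun x => |K x|)) (hK0 : K ≠ 0) :
    0 < KsupNorm d K := by
  obtain ⟨x, hx⟩ := Function.ne_iff.1 hK0
  exact (abs_pos.2 hx).trans_le (abs_le_KsupNorm hK x)

end KernelSup

/-- The contribution `K²((t - x)/h) / (n² ∏ h_i²)` of an observation at `x` to `σ̃_t²(h)`. -/
noncomputable def sigmaTildeSqTerm (d n : ℕ) (K : Vec d → ℝ) (h t x : Vec d) : ℝ :=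
  ((n : ℝ) ^ 2 * (∏ i, h i) ^ 2)⁻¹ * K (fun j => (t j - x j) / h j) ^ 2

section SigmaTildeSqTerm

variable {d n : ℕ} {K p : Vec d → ℝ}

theorem measurable_sigmaTildeSqTerm (hK : Measurable K) (h t : Vec d) :
    Measurable (sigmaTildeSqTerm d n K h t) := by
  unfold sigmaTildeSqTerm
  fun_prop

theorem sigmaTildeSqTerm_mem_Icc (hK : BddAbove (Set.range fun x => |K x|)) (h t x : Vec d) :
    sigmaTildeSqTerm d n K h t x ∈
      Set.Icc 0 (KsupNorm d K ^ 2 / ((n : ℝ) ^ 2 * (∏ i, h i) ^ 2)) := by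
  refine ⟨by unfold sigmaTildeSqTerm; positivity, ?_⟩
  rw [sigmaTildeSqTerm, inv_mul_eq_div, ← sq_abs]
  gcongr ?_ ^ 2 / _
  exact abs_le_KsupNorm hK _

theorem sigmaTildeSq_eq_sum (K : Vec d → ℝ) (h t : Vec d) (X : Sample d n) :
    sigmaTildeSq d n K h X t = ∑ i, sigmaTildeSqTerm d n K h t (X i) :=
  Finset.mul_sum _ _ _

theorem integral_sigmaTildeSqTerm (hp : IsProbDensity d p) (K : Vec d → ℝ) (h t : Vec d) :
    ∫ x, sigmaTildeSqTerm d n K h t x ∂pdfMeasure d p = (n : ℝ)⁻¹ * sigmaSq d n K p h t := by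
  simp only [sigmaTildeSqTerm, sigmaSq, scaledKernel, hp.integral_pdfMeasure, mul_pow, mul_assoc,
    integral_const_mul]
  ring

theorem sum_integral_sigmaTildeSqTerm (hp : IsProbDensity d p) (hK : Measurable K) (hn : n ≠ 0)
    (h t : Vec d) :
    ∑ i, ∫ X, sigmaTildeSqTerm d n K h t (X i) ∂jointMeasure d n p = sigmaSq d n K p h t := by
  have := hp.isProbabilityMeasure_pdfMeasure
  have hmarginal (i : Fin n) : ∫ X, sigmaTildeSqTerm d n K h t (X i) ∂jointMeasure d n p =
      (n : ℝ)⁻¹ * sigmaSq d n K p h t := by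
    rw [← integral_sigmaTildeSqTerm hp]
    exact integral_comp_eval (measurable_sigmaTildeSqTerm hK h t).aestronglyMeasurable
  simp only [hmarginal, Finset.sum_const, Finset.card_univ, Fintype.card_fin, nsmul_eq_mul]
  exact mul_inv_cancel_left₀ (Nat.cast_ne_zero.2 hn) _

theorem iIndepFun_sigmaTildeSqTerm (hp : IsProbDensity d p) (hK : Measurable K) (h t : Vec d) :
    iIndepFun (fun i (X : Sample d n) => sigmaTildeSqTerm d n K h t (X i))
      (jointMeasure d n p) := by
  have := hp.isProbabilityMeasure_pdfMeasure
  exact iIndepFun_pi fun _ => (measurable_sigmaTildeSqTerm hK h t).aemeasurable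

end SigmaTildeSqTerm

namespace IsProductKernel

variable {d : ℕ} {K : Vec d → ℝ}

theorem measurable (hK : IsProductKernel d K) : Measurable K := by
  obtain ⟨Ki, hprod, hKi⟩ := hK
  have hmeas (i : Fin d) : Measurable (Ki i) := by
    obtain ⟨-, -, hzero, hcont, -⟩ := hKi i
    refine measurable_of_restrict_of_restrict_compl measurableSet_Icc
      hcont.domRestrict.measurable ?_
    have hcompl : (Set.Icc (-1 : ℝ) 1)ᶜ.domRestrict (Ki i) = 0 := funext fun y => hzero y y.2
    exact hcompl ▸ measurable_const
  rw [funext hprod]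
  fun_prop

theorem bddAbove_range_abs (hK : IsProductKernel d K) :
    BddAbove (Set.range fun x => |K x|) := by
  obtain ⟨Ki, hprod, hKi⟩ := hK
  have hbdd (i : Fin d) : ∃ C, ∀ y, |Ki i y| ≤ C := by
    obtain ⟨-, -, hzero, hcont, -⟩ := hKi i
    obtain ⟨C, hC⟩ := isCompact_Icc.exists_bound_of_continuousOn hcont
    refine ⟨max C 0, fun y => ?_⟩
    by_cases hy : y ∈ Set.Icc (-1 : ℝ) 1
    · exact (hC y hy).trans (le_max_left _ _)
    · simp [hzero y hy]
  choose C hC using hbdd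
  refine ⟨∏ i, C i, Set.forall_mem_range.2 fun x => ?_⟩
  rw [hprod, Finset.abs_prod]
  exact Finset.prod_le_prod (fun i _ => abs_nonneg _) fun i _ => hC i _

theorem ne_zero (hK : IsProductKernel d K) : K ≠ 0 := by
  obtain ⟨Ki, hprod, hKi⟩ := hK
  have hzero : K 0 ≠ 0 := by
    rw [hprod]
    exact Finset.prod_ne_zero_iff.2 fun i _ => (hKi i).2.2.2.2.2.ne'
  exact fun h => hzero (congrFun h 0)

end IsProductKernel

theorem statement11_general {d : ℕ} {K : Vec d → ℝ} (hKm : Measurable K)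
    (hKb : BddAbove (Set.range fun x => |K x|)) (hK0 : K ≠ 0) {p : Vec d → ℝ}
    (hp : IsProbDensity d p) {n : ℕ} (hn : 2 ≤ n) {h : Vec d} (hh : ∀ i, h i ≠ 0) (t : Vec d)
    {η : ℝ} (hη : 0 ≤ η) :
    jointMeasure d n p
        {X | η ≤ |sigmaTildeSqTrunc d n K h X t / sigmaSqTrunc d n K p h t - 1|} ≤
      ENNReal.ofReal (2 * exp (-(η ^ 2 / (2 + η) * (log n / KsupNorm d K) ^ 2))) := by
  have hindep := iIndepFun_sigmaTildeSqTerm (n := n) hp hKm h t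
  have := hindep.isProbabilityMeasure
  have hprod : ∏ i, h i ≠ 0 := Finset.prod_ne_zero_iff.2 fun i _ => hh i
  have hsup := KsupNorm_pos hKb hK0
  have hlog : 0 < log n := log_pos (by exact_mod_cast hn)
  have hlevel : 0 < truncLevel d n h := by unfold truncLevel; positivity
  have hratio : truncLevel d n h / (KsupNorm d K ^ 2 / ((n : ℝ) ^ 2 * (∏ i, h i) ^ 2)) =
      (log n / KsupNorm d K) ^ 2 := by
    unfold truncLevel
    field_simp
  have hbound := measure_abs_max_sum_div_max_sub_one_ge_le_of_mem_Icc hindep (s := Finset.univ)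
    (fun i => ((measurable_sigmaTildeSqTerm hKm h t).comp (measurable_pi_apply i)).aemeasurable)
    (by positivity) (fun i _ => ae_of_all _ fun X => sigmaTildeSqTerm_mem_Icc hKb h t (X i)) hη
    hlevel
  rw [sum_integral_sigmaTildeSqTerm hp hKm (by lia), hratio] at hbound
  simp only [Finset.sum_apply, ← sigmaTildeSq_eq_sum] at hbound
  exact (ENNReal.le_ofReal_iff_toReal_le (measure_ne_top _ _) (by positivity)).2 hbound

/-- Lemma 5.3, concentration of the truncated variance estimator.
For every bandwidth `h` with positive components, every `t` and every `η ≥ 0`: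
`P^{⊗n}( |σ̃²_{t,trunc}(h)/σ²_{t,trunc}(h) - 1| ≥ η ) ≤ 2 exp(-3η² log²n / (2(3+2η)‖K‖_sup²))`. -/
theorem statement11 (d : ℕ) (hd : 1 ≤ d) (K : Vec d → ℝ) (hK : IsProductKernel d K)
    (p : Vec d → ℝ) (hp : IsProbDensity d p) (n : ℕ) (hn : 2 ≤ n)
    (h : Vec d) (hh : ∀ i, 0 < h i) (t : Vec d) (η : ℝ) (hη : 0 ≤ η) :
    jointMeasure d n p
        {X | η ≤ |sigmaTildeSqTrunc d n K h X t / sigmaSqTrunc d n K p h t - 1|} ≤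
      ENNReal.ofReal
        (2 * Real.exp (-(3 * η ^ 2 * (Real.log n) ^ 2) /
          (2 * (3 + 2 * η) * (KsupNorm d K) ^ 2))) := by
  refine (statement11_general hK.measurable hK.bddAbove_range_abs hK.ne_zero hp hn
    (fun i => (hh i).ne') t hη).trans (ENNReal.ofReal_le_ofReal ?_)
  rw [neg_div, mul_div_mul_comm, ← div_pow]
  gcongr 2 * exp (-(?_ * _))
  exact three_mul_sq_div_le_sq_div_two_add hη
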